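/- Second inversion relation for intertwining vectors: for all b ∈ ℤ, all ε, ε' ∈ {+1,−1}, and all u ∈ ℂ with [u] ≠ 0 and [b] ≠ 0, one has Σ_{a ∈ {b−1, b+1}} ψ*_{ε'}(u)^a_b · ψ_ε(u)^b_a = 1 if ε' = ε, and = 0 if ε' ≠ ε. -/

import Mathlib

noncomputable section

open Complex Finset

namespace Ell

/-- `x^s = exp(-iπ s /(r τ))`. -/
def xp (τ : ℂ) (r : ℝ) (s : ℂ) : ℂ :=
  Complex.exp (-Complex.I * (Real.pi : ℂ) * s / ((r : ℂ) * τ))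

/-- `Θ_p(z) = ∏_{j ≥ 0} (1 - z p^j)(1 - p^{j+1}/z)(1 - p^{j+1})`. -/
def Theta (p z : ℂ) : ℂ :=
  ∏' j : ℕ, ((1 - z * p ^ j) * (1 - p ^ (j + 1) / z) * (1 - p ^ (j + 1)))

/-- The bracket `[u] = x^{u²/r - u} Θ_p(x^{2u})` with `p = x^{2r}`. -/
def br (τ : ℂ) (r : ℝ) (u : ℂ) : ℂ :=
  xp τ r (u ^ 2 / (r : ℂ) - u) * Theta (xp τ r (2 * (r : ℂ))) (xp τ r (2 * u))

/-- Elliptic shifted factorial `[u]_n = ∏_{j=0}^{n-1} [u+j]`. -/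
def brF (τ : ℂ) (r : ℝ) (u : ℂ) (n : ℕ) : ℂ :=
  ∏ j ∈ Finset.range n, br τ r (u + (j : ℂ))

/-- Elliptic binomial coefficient `C_n^k(α,β,γ)`. -/
def Cnk (τ : ℂ) (r : ℝ) (k n : ℕ) (α β γ : ℂ) : ℂ :=
  brF τ r 1 k / (brF τ r 1 n * brF τ r 1 (k - n)) *
    (brF τ r (α - γ) n * brF τ r (α + γ + (k : ℂ) - (n : ℂ)) n *
      brF τ r (α - β) (k - n) * brF τ r (α + β + (n : ℂ)) (k - n)) /
    (brF τ r (β - γ + (n : ℂ) - (k : ℂ)) n * brF τ r (γ - β - (n : ℂ)) (k - n) *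
      brF τ r (β + γ) k)

/-- The elliptic 6j-symbol `R_n^m(α,β,γ,δ;k)`. -/
def Rnm (τ : ℂ) (r : ℝ) (k n m : ℕ) (α β γ δ : ℂ) : ℂ :=
  ∑ j ∈ Finset.range (min n m + 1),
    Cnk τ r n j α γ (β + (k : ℂ) - (n : ℂ)) * Cnk τ r (k - j) (m - j) β (γ + (j : ℂ)) δ

/-- Terminating very-well-poised elliptic hypergeometric sum with explicit
truncation `N`:  `Σ_{j=0}^N ([u₀+2j]/[u₀]) ([u₀]_j/[1]_j) ∏ᵢ [uᵢ]_j/[u₀+1-uᵢ]_j`. -/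
def Vsum (τ : ℂ) (r : ℝ) (u₀ : ℂ) (us : List ℂ) (N : ℕ) : ℂ :=
  ∑ j ∈ Finset.range (N + 1),
    br τ r (u₀ + 2 * (j : ℂ)) / br τ r u₀ * (brF τ r u₀ j / brF τ r 1 j) *
      (us.map fun ui => brF τ r ui j / brF τ r (u₀ + 1 - ui) j).prod

/-- "Every bracket appearing in a denominator of `C_n^k(·,β,γ)` is nonzero". -/
def CdenomNZ (τ : ℂ) (r : ℝ) (k n : ℕ) (β γ : ℂ) : Prop :=
  brF τ r 1 n ≠ 0 ∧ brF τ r 1 (k - n) ≠ 0 ∧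
    brF τ r (β - γ + (n : ℂ) - (k : ℂ)) n ≠ 0 ∧
    brF τ r (γ - β - (n : ℂ)) (k - n) ≠ 0 ∧ brF τ r (β + γ) k ≠ 0

/-- "Every bracket appearing in a denominator of `R_n^m(α,β,γ,δ;k)` is nonzero". -/
def RdenomNZ (τ : ℂ) (r : ℝ) (k n m : ℕ) (β γ δ : ℂ) : Prop :=
  ∀ j ≤ min n m,
    CdenomNZ τ r n j γ (β + (k : ℂ) - (n : ℂ)) ∧
      CdenomNZ τ r (k - j) (m - j) (γ + (j : ℂ)) δ

/-- Jacobi theta `ϑ₁(v|σ)`. -/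
def th1 (v σ : ℂ) : ℂ :=
  2 * Complex.exp (2 * (Real.pi : ℂ) * Complex.I * σ / 8) *
    (∏' n : ℕ, (1 - Complex.exp (2 * (Real.pi : ℂ) * Complex.I * σ) ^ (n + 1))) *
    Complex.sin ((Real.pi : ℂ) * v) *
    ∏' n : ℕ,
      (1 - 2 * Complex.exp (2 * (Real.pi : ℂ) * Complex.I * σ) ^ (n + 1) *
            Complex.cos (2 * (Real.pi : ℂ) * v) +
        Complex.exp (2 * (Real.pi : ℂ) * Complex.I * σ) ^ (2 * (n + 1)))

/-- Jacobi theta `ϑ₀(v|σ)`. -/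
def th0 (v σ : ℂ) : ℂ :=
  -Complex.I * Complex.exp ((Real.pi : ℂ) * Complex.I * (v + σ / 4)) * th1 (v + σ / 2) σ

/-- Jacobi theta `ϑ₂(v|σ)`. -/
def th2 (v σ : ℂ) : ℂ := th1 (v + 1 / 2) σ

/-- Jacobi theta `ϑ₃(v|σ)`. -/
def th3 (v σ : ℂ) : ℂ :=
  Complex.exp ((Real.pi : ℂ) * Complex.I * (v + σ / 4)) * th1 (v + (σ + 1) / 2) σ

/-- Intertwining vector component `ψ_ε(u)^a_b`, `ε ∈ {1, -1}`. -/
def psi (τ : ℂ) (r : ℝ) (u : ℂ) (ε : ℤ) (a b : ℤ) : ℂ :=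
  if ε = 1 then th0 ((((a : ℂ) - (b : ℂ)) * u + (a : ℂ)) / (2 * (r : ℂ))) (τ / 2)
  else th3 ((((a : ℂ) - (b : ℂ)) * u + (a : ℂ)) / (2 * (r : ℂ))) (τ / 2)

/-- The constant `C = x^{-r/4} e^{-iπ/4} τ^{1/2}`. -/
def Cc (τ : ℂ) (r : ℝ) : ℂ :=
  xp τ r (-(r : ℂ) / 4) * Complex.exp (-(Real.pi : ℂ) * Complex.I / 4) * τ ^ (1 / 2 : ℂ)

/-- Dual intertwining vector component `ψ*_ε(u)^a_b = -ε(a-b) C² ψ_{-ε}(u-1)^a_b/(2[b][u])`. -/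
def psiStar (τ : ℂ) (r : ℝ) (u : ℂ) (ε : ℤ) (a b : ℤ) : ℂ :=
  -(ε : ℂ) * ((a : ℂ) - (b : ℂ)) * Cc τ r ^ 2 * psi τ r (u - 1) (-ε) a b /
    (2 * br τ r (b : ℂ) * br τ r u)

/-- Sign attached to a boolean. -/
def sg (b : Bool) : ℤ := if b then 1 else -1

/-- Canonical path from `a`: up for `j ≤ n`, down afterwards. -/
def cpathZ (a n : ℤ) (j : ℕ) : ℤ := if (j : ℤ) ≤ n then a + j else a + 2 * n - j

/-- Admissibility: `a - b ∈ {-k, -k+2, …, k}`. -/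
def adm (k : ℕ) (a b : ℤ) : Prop := (a - b).natAbs ≤ k ∧ (a - b - (k : ℤ)) % 2 = 0

instance (k : ℕ) (a b : ℤ) : Decidable (adm k a b) := by unfold adm; infer_instance

/-- Fused intertwining vector component `ψ^{(k)}_μ(u)^a_b` (zero if `a,b` not admissible). -/
def psiF (τ : ℂ) (r : ℝ) (k : ℕ) (μ : ℤ) (u : ℂ) (a b : ℤ) : ℂ :=
  if adm k a b then
    ∑ ε ∈ Finset.univ.filter fun ε : Fin k → Bool => (∑ j, sg (ε j)) = μ,
      ∏ j : Fin k,
        psi τ r (u + (k : ℂ) - (((j : ℕ) + 1 : ℕ) : ℂ)) (sg (ε j))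
          (cpathZ a (((k : ℤ) - (a - b)) / 2) (j : ℕ))
          (cpathZ a (((k : ℤ) - (a - b)) / 2) ((j : ℕ) + 1))
  else 0

/-- Partial-sum path attached to a sign sequence `δ`, starting at `a`. -/
def spath (k : ℕ) (a : ℤ) (δ : Fin k → Bool) (j : ℕ) : ℤ :=
  a + ∑ i ∈ Finset.range j, if h : i < k then sg (δ ⟨i, h⟩) else 0

/-- Fused dual intertwining vector component `ψ*^{(k)}_μ(u)^b_a`
(sum over all admissible paths from `a` to `b`; zero if not admissible). -/
def psiStarF (τ : ℂ) (r : ℝ) (k : ℕ) (μ : ℤ) (u : ℂ) (b a : ℤ) : ℂ :=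
  if adm k a b then
    ∑ δ ∈ Finset.univ.filter fun δ : Fin k → Bool => (∑ j, sg (δ j)) = b - a,
      ∏ j : Fin k,
        psiStar τ r (u + (k : ℂ) - (((j : ℕ) + 1 : ℕ) : ℂ))
          (if ((j : ℕ) + 1 : ℤ) ≤ ((k : ℤ) + μ) / 2 then 1 else -1)
          (spath k a δ ((j : ℕ) + 1)) (spath k a δ (j : ℕ))
  else 0

/-- The `L`-matrix `L^{(k)}(a,b;c,d|u) = Σ_μ ψ*^{(k)}_μ(u)^d_c ψ^{(k)}_μ(u)^a_b`. -/
def Lk (τ : ℂ) (r : ℝ) (k : ℕ) (u : ℂ) (a b c d : ℤ) : ℂ :=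
  ∑ i ∈ Finset.range (k + 1),
    psiStarF τ r k ((k : ℤ) - 2 * (i : ℤ)) u d c * psiF τ r k ((k : ℤ) - 2 * (i : ℤ)) u a b

/-- Normalized face weight `W̄(a,b;d,c|u)` (arguments ordered (NW, NE; SW, SE)). -/
def Wb (τ : ℂ) (r : ℝ) (u : ℂ) (a b d c : ℤ) : ℂ :=
  if b = a + 1 ∧ d = a + 1 ∧ c = a + 2 then 1
  else if b = a - 1 ∧ d = a - 1 ∧ c = a - 2 then 1
  else if b = a + 1 ∧ d = a + 1 ∧ c = a then
    br τ r ((a : ℂ) - u) * br τ r 1 / (br τ r (a : ℂ) * br τ r (1 + u))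
  else if b = a - 1 ∧ d = a - 1 ∧ c = a then
    br τ r ((a : ℂ) + u) * br τ r 1 / (br τ r (a : ℂ) * br τ r (1 + u))
  else if b = a + 1 ∧ d = a - 1 ∧ c = a then
    br τ r ((a : ℂ) + 1) * br τ r u / (br τ r (a : ℂ) * br τ r (1 + u))
  else if b = a - 1 ∧ d = a + 1 ∧ c = a then
    br τ r ((a : ℂ) - 1) * br τ r u / (br τ r (a : ℂ) * br τ r (1 + u))
  else 0

/-- Sequence with prescribed endpoints `d`, `c` and free interior values `f`. -/
def seqI (k : ℕ) (d c : ℤ) (f : Fin (k - 1) → ℤ) (j : ℕ) : ℤ :=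
  if h0 : j = 0 then d
  else if hj : j < k then f ⟨j - 1, by omega⟩ else c

/-- Fused face weight `W^{(k,1)}(a,b;d,c|u)`. -/
def Wk1 (τ : ℂ) (r : ℝ) (k : ℕ) (u : ℂ) (a b d c : ℤ) : ℂ :=
  if adm k a b then
    ∑' f : Fin (k - 1) → ℤ,
      ∏ j ∈ Finset.range k,
        Wb τ r (u + (k : ℂ) - ((j : ℂ) + 1))
          (cpathZ a (((k : ℤ) - (a - b)) / 2) j)
          (cpathZ a (((k : ℤ) - (a - b)) / 2) (j + 1))
          (seqI k d c f j) (seqI k d c f (j + 1))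
  else 0

/-- Fused face weight `W^{(k,l)}(a,b;d,c|u)`. -/
def Wkl (τ : ℂ) (r : ℝ) (k l : ℕ) (u : ℂ) (a b d c : ℤ) : ℂ :=
  if adm l b c then
    ∑' g : Fin (l - 1) → ℤ,
      ∏ i ∈ Finset.range l,
        Wk1 τ r k (u - (l : ℂ) + ((i : ℂ) + 1))
          (seqI l a d g i) (cpathZ b (((l : ℤ) - (b - c)) / 2) i)
          (seqI l a d g (i + 1)) (cpathZ b (((l : ℤ) - (b - c)) / 2) (i + 1))
  else 0

/-- Eight-vertex weight `ā(u)`. -/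
def aw (τ : ℂ) (r : ℝ) (u : ℂ) : ℂ :=
  th2 (1 / (2 * (r : ℂ))) (τ / 2) * th2 (u / (2 * (r : ℂ))) (τ / 2) /
    (th2 0 (τ / 2) * th2 ((1 + u) / (2 * (r : ℂ))) (τ / 2))

/-- Eight-vertex weight `b̄(u)`. -/
def bw (τ : ℂ) (r : ℝ) (u : ℂ) : ℂ :=
  th2 (1 / (2 * (r : ℂ))) (τ / 2) * th1 (u / (2 * (r : ℂ))) (τ / 2) /
    (th2 0 (τ / 2) * th1 ((1 + u) / (2 * (r : ℂ))) (τ / 2))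

/-- Eight-vertex weight `c̄(u)`. -/
def cw (τ : ℂ) (r : ℝ) (u : ℂ) : ℂ :=
  th1 (1 / (2 * (r : ℂ))) (τ / 2) * th2 (u / (2 * (r : ℂ))) (τ / 2) /
    (th2 0 (τ / 2) * th1 ((1 + u) / (2 * (r : ℂ))) (τ / 2))

/-- Eight-vertex weight `d̄(u)`. -/
def dw (τ : ℂ) (r : ℝ) (u : ℂ) : ℂ :=
  -(th1 (1 / (2 * (r : ℂ))) (τ / 2) * th1 (u / (2 * (r : ℂ))) (τ / 2)) /
    (th2 0 (τ / 2) * th2 ((1 + u) / (2 * (r : ℂ))) (τ / 2))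

/-- The normalized eight-vertex `R`-matrix entry `R̄(u)_{(ε₁,ε₂),(ε₁',ε₂')}`. -/
def Rbar (τ : ℂ) (r : ℝ) (u : ℂ) (e1 e2 e1' e2' : ℤ) : ℂ :=
  if e1' = e1 ∧ e2' = e2 ∧ e1 = e2 then aw τ r u
  else if e1' = e1 ∧ e2' = e2 ∧ e1 = -e2 then bw τ r u
  else if e1' = e2 ∧ e2' = e1 ∧ e1 = -e2 then cw τ r u
  else if e1' = -e1 ∧ e2' = -e2 ∧ e1 = e2 then dw τ r u
  else 0

/-- Sklyanin standard-basis vector `v_+(z)`. -/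
def vp (τ z : ℂ) : ℂ := th3 (2 * z) (2 * τ) - th2 (2 * z) (2 * τ)

/-- Sklyanin standard-basis vector `v_-(z)`. -/
def vm (τ z : ℂ) : ℂ := th3 (2 * z) (2 * τ) + th2 (2 * z) (2 * τ)


def PP (Q : ℂ) (n : ℕ) : ℂ := ∏ i ∈ Finset.range n, (1 - Q ^ (i + 1))

def RR (Q : ℂ) (m : ℤ) : ℂ := if 0 ≤ m then (PP Q m.toNat)⁻¹ else 0

lemma one_sub_pow_ne {Q : ℂ} (hQ : ‖Q‖ < 1) (i : ℕ) : 1 - Q ^ (i + 1) ≠ 0 := by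
  intro h
  have h1 : Q ^ (i + 1) = 1 := (sub_eq_zero.mp h).symm
  have h2 : ‖Q‖ ^ (i + 1) < 1 := pow_lt_one₀ (norm_nonneg _) hQ (by omega)
  rw [← norm_pow, h1, norm_one] at h2
  exact lt_irrefl _ h2

lemma PP_ne {Q : ℂ} (hQ : ‖Q‖ < 1) (n : ℕ) : PP Q n ≠ 0 :=
  Finset.prod_ne_zero_iff.mpr fun i _ => one_sub_pow_ne hQ i

lemma RR_rec {Q : ℂ} (hQ : ‖Q‖ < 1) (m : ℤ) : RR Q (m - 1) = (1 - Q ^ m) * RR Q m := by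
  rcases lt_trichotomy m 0 with h | h | h
  · simp [RR, show ¬ (1 ≤ m) by omega, show ¬ (0 ≤ m) by omega]
  · subst h; simp [RR]
  · obtain ⟨n, rfl⟩ : ∃ n : ℕ, m = n + 1 := ⟨(m - 1).toNat, by omega⟩
    have h1 : ((n : ℤ) + 1).toNat = n + 1 := by omega
    have hz : Q ^ ((n : ℤ) + 1) = Q ^ (n + 1) := by exact_mod_cast zpow_natCast Q (n + 1)
    simp only [RR, add_sub_cancel_right, show (0 : ℤ) ≤ n by omega, show (0 : ℤ) ≤ n + 1 by omega,
      if_true, h1, Int.toNat_natCast, hz]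
    have h2 : PP Q (n + 1) = PP Q n * (1 - Q ^ (n + 1)) := Finset.prod_range_succ _ _
    rw [h2]
    have := one_sub_pow_ne hQ n
    have := PP_ne hQ n
    field_simp

def cN (q : ℂ) (N : ℕ) (k : ℤ) : ℂ :=
  q ^ (k ^ 2) * PP (q ^ 2) (2 * N) * RR (q ^ 2) (N - k) * RR (q ^ 2) (N + k)

lemma cN_rec {q : ℂ} (hq0 : q ≠ 0) (hq : ‖q‖ < 1) (N : ℕ) (k : ℤ) :
    cN q (N + 1) k = cN q N k * (1 + q ^ (4 * N + 2)) +
      q ^ (2 * N + 1) * (cN q N (k - 1) + cN q N (k + 1)) := by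
  have hQ : ‖q ^ 2‖ < 1 := by rw [norm_pow]; exact pow_lt_one₀ (norm_nonneg _) hq (by norm_num)
  have a1 := RR_rec hQ (N + 1 - k)
  have a2 := RR_rec hQ (N - k)
  have b1 := RR_rec hQ (N + 1 + k)
  have b2 := RR_rec hQ (N + k)
  have e1 : ((N : ℤ) + 1 - k - 1) = N - k := by ring
  have e2 : ((N : ℤ) + 1 + k - 1) = N + k := by ring
  rw [e1] at a1
  rw [e2] at b1
  have hP : PP (q ^ 2) (2 * (N + 1)) =
      PP (q ^ 2) (2 * N) * (1 - (q ^ 2) ^ (2 * N + 1)) * (1 - (q ^ 2) ^ (2 * N + 2)) := by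
    rw [show 2 * (N + 1) = 2 * N + 1 + 1 by ring, PP, Finset.prod_range_succ,
      Finset.prod_range_succ]; rfl
  have f1 : ((N : ℤ) - (k - 1)) = N + 1 - k := by ring
  have f2 : ((N : ℤ) + (k - 1)) = N + k - 1 := by ring
  have f3 : ((N : ℤ) - (k + 1)) = N - k - 1 := by ring
  have f4 : ((N : ℤ) + (k + 1)) = N + 1 + k := by ring
  simp only [cN, Nat.cast_add, Nat.cast_one, f1, f2, f3, f4, a2, b2, a1, b1, hP]
  generalize RR (q ^ 2) (N + 1 - k) = A
  generalize RR (q ^ 2) (N + 1 + k) = B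
  generalize PP (q ^ 2) (2 * N) = P
  have g1 : q ^ ((k - 1) ^ 2) = q ^ (k ^ 2) * (q ^ k)⁻¹ ^ 2 * q := by
    rw [show (k - 1) ^ 2 = k ^ 2 + (-k) + (-k) + 1 by ring, zpow_add₀ hq0, zpow_add₀ hq0,
      zpow_add₀ hq0, zpow_neg, zpow_one]; ring
  have g2 : q ^ ((k + 1) ^ 2) = q ^ (k ^ 2) * (q ^ k) ^ 2 * q := by
    rw [show (k + 1) ^ 2 = k ^ 2 + (k) + (k) + 1 by ring, zpow_add₀ hq0, zpow_add₀ hq0,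
      zpow_add₀ hq0, zpow_one]; ring
  have hq2 : q ^ 2 ≠ 0 := pow_ne_zero _ hq0
  have g3 : (q ^ 2) ^ k = (q ^ k) ^ 2 := by
    rw [← zpow_natCast, ← zpow_natCast, ← zpow_mul, ← zpow_mul, mul_comm]
  have g4 : (q ^ 2) ^ (N : ℤ) = (q ^ N) ^ 2 := by
    rw [zpow_natCast, ← pow_mul, ← pow_mul, mul_comm]
  rw [g1, g2]
  simp only [zpow_add₀ hq2, zpow_sub₀ hq2, zpow_one, g3, g4]
  have g5 : q ^ (4 * N + 2) = (q ^ N) ^ 4 * q ^ 2 := by ring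
  have g6 : q ^ (2 * N + 1) = (q ^ N) ^ 2 * q := by ring
  have g7 : (q ^ 2) ^ (2 * N + 1) = (q ^ N) ^ 4 * q ^ 2 := by ring
  have g8 : (q ^ 2) ^ (2 * N + 2) = (q ^ N) ^ 4 * q ^ 4 := by ring
  rw [g5, g6, g7, g8]
  have hw : q ^ k ≠ 0 := zpow_ne_zero _ hq0
  generalize q ^ k = w at *
  generalize q ^ N = a at *
  generalize q ^ (k ^ 2) = s at *
  field_simp
  ring

lemma hasSum_cN {q z : ℂ} (hq0 : q ≠ 0) (hq : ‖q‖ < 1) (hz : z ≠ 0) (N : ℕ) :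
    HasSum (fun k : ℤ => cN q N k * z ^ k)
      (∏ j ∈ Finset.range N, ((1 + z * q ^ (2 * j + 1)) * (1 + z⁻¹ * q ^ (2 * j + 1)))) := by
  induction N with
  | zero =>
    have h := hasSum_single (f := fun k : ℤ => cN q 0 k * z ^ k) 0 (by
      intro k hk
      rcases lt_or_gt_of_ne hk with h | h
      · simp [cN, RR, show ¬ (0 ≤ k) by omega]
      · simp [cN, RR, show ¬ (k ≤ 0) by omega])
    simpa [cN, RR, PP] using h
  | succ N ih =>
    rw [Finset.prod_range_succ]
    set S := ∏ j ∈ Finset.range N, ((1 + z * q ^ (2 * j + 1)) * (1 + z⁻¹ * q ^ (2 * j + 1)))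
    have h1 := (Equiv.subRight (1 : ℤ)).hasSum_iff.mpr ih
    have h2 := (Equiv.addRight (1 : ℤ)).hasSum_iff.mpr ih
    have h := (ih.mul_left (1 + q ^ (4 * N + 2))).add
      ((h1.mul_left (q ^ (2 * N + 1) * z)).add (h2.mul_left (q ^ (2 * N + 1) * z⁻¹)))
    have e1 : (fun k : ℤ => cN q (N + 1) k * z ^ k) = fun k : ℤ =>
        (1 + q ^ (4 * N + 2)) * (cN q N k * z ^ k) + (q ^ (2 * N + 1) * z *
        ((fun k : ℤ => cN q N k * z ^ k) ∘ (Equiv.subRight (1 : ℤ))) k + q ^ (2 * N + 1) * z⁻¹ *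
        ((fun k : ℤ => cN q N k * z ^ k) ∘ (Equiv.addRight (1 : ℤ))) k) := by
      funext k
      simp only [Function.comp, Equiv.subRight_apply, Equiv.coe_addRight, cN_rec hq0 hq N k,
        zpow_add₀ hz, zpow_sub₀ hz, zpow_one]
      field_simp
    have e2 : S * ((1 + z * q ^ (2 * N + 1)) * (1 + z⁻¹ * q ^ (2 * N + 1))) =
        (1 + q ^ (4 * N + 2)) * S + (q ^ (2 * N + 1) * z * S + q ^ (2 * N + 1) * z⁻¹ * S) := by
      have g5 : q ^ (4 * N + 2) = (q ^ (2 * N + 1)) ^ 2 := by ring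
      rw [g5]
      field_simp
      ring
    rw [e1, e2]
    exact h

open Filter Topology in
lemma summable_pow_aux {q : ℂ} (hq : ‖q‖ < 1) (c : ℂ) :
    Summable fun j : ℕ => ‖c * (q ^ 2) ^ j‖ := by
  have hQ : ‖q ^ 2‖ < 1 := by rw [norm_pow]; exact pow_lt_one₀ (norm_nonneg _) hq (by norm_num)
  simp only [norm_mul, norm_pow _ (_ : ℕ)]
  refine (summable_geometric_of_lt_one (by positivity) ?_).mul_left _
  simpa using hQ

lemma mult_aux {q : ℂ} (hq : ‖q‖ < 1) (c : ℂ) :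
    Multipliable fun j : ℕ => 1 + c * (q ^ 2) ^ j :=
  multipliable_one_add_of_summable (summable_pow_aux hq c)

open Filter Topology in
lemma jtp {q z : ℂ} (hq0 : q ≠ 0) (hq : ‖q‖ < 1) (hz : z ≠ 0)
    (hs : Summable fun k : ℤ => ‖q ^ (k ^ 2) * z ^ k‖) :
    ∑' k : ℤ, q ^ (k ^ 2) * z ^ k = (∏' j : ℕ, (1 - (q ^ 2) ^ (j + 1))) *
      ∏' j : ℕ, ((1 + z * q ^ (2 * j + 1)) * (1 + z⁻¹ * q ^ (2 * j + 1))) := by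
  have hQ : ‖q ^ 2‖ < 1 := by rw [norm_pow]; exact pow_lt_one₀ (norm_nonneg _) hq (by norm_num)
  have m0 : Multipliable fun j : ℕ => (1 - (q ^ 2) ^ (j + 1)) := by
    convert mult_aux hq (-q ^ 2) using 2; ring
  have m1 : Multipliable fun j : ℕ => (1 + z * q ^ (2 * j + 1)) := by
    convert mult_aux hq (z * q) using 2; ring
  have m2 : Multipliable fun j : ℕ => (1 + z⁻¹ * q ^ (2 * j + 1)) := by
    convert mult_aux hq (z⁻¹ * q) using 2; ring
  have t0 : Tendsto (PP (q ^ 2)) atTop (𝓝 (∏' j : ℕ, (1 - (q ^ 2) ^ (j + 1)))) :=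
    m0.tendsto_prod_tprod_nat
  have hne : (∏' j : ℕ, (1 - (q ^ 2) ^ (j + 1))) ≠ 0 := by
    have := tprod_one_add_ne_zero_of_summable (f := fun j : ℕ => -(q ^ 2) ^ (j + 1))
      (fun j => by simpa [sub_eq_add_neg] using one_sub_pow_ne hQ j)
      ((summable_pow_aux hq (-q ^ 2)).congr fun j => by congr 1; ring)
    simpa [sub_eq_add_neg] using this
  set E := ∏' j : ℕ, (1 - (q ^ 2) ^ (j + 1)) with hE
  have t1 : Tendsto (fun n => (PP (q ^ 2) n)⁻¹) atTop (𝓝 E⁻¹) := t0.inv₀ hne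
  obtain ⟨M0, hM0⟩ := t0.norm.bddAbove_range
  obtain ⟨M1, hM1⟩ := t1.norm.bddAbove_range
  have b0 : ∀ n, ‖PP (q ^ 2) n‖ ≤ M0 := fun n => hM0 ⟨n, rfl⟩
  have b1' : ∀ n, ‖(PP (q ^ 2) n)⁻¹‖ ≤ M1 := fun n => hM1 ⟨n, rfl⟩
  have hM0' : 0 ≤ M0 := (norm_nonneg _).trans (b0 0)
  have hM1' : 0 ≤ M1 := (norm_nonneg _).trans (b1' 0)
  have b1 : ∀ m, ‖RR (q ^ 2) m‖ ≤ M1 := by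
    intro m
    unfold RR
    split_ifs
    · exact b1' _
    · simpa using hM1'
  have tR : ∀ g : ℕ → ℤ, Tendsto g atTop atTop → Tendsto (fun N => RR (q ^ 2) (g N)) atTop (𝓝 E⁻¹) := by
    intro g hg
    have h1 : Tendsto (fun N => (g N).toNat) atTop atTop := by
      refine tendsto_atTop.mpr fun b => ?_
      filter_upwards [hg.eventually_ge_atTop (b : ℤ)] with N hN
      omega
    refine (t1.comp h1).congr' ?_
    filter_upwards [hg.eventually_ge_atTop 0] with N hN
    simp [RR, hN]
  have tN : Tendsto (fun N : ℕ => (N : ℤ)) atTop atTop := tendsto_natCast_atTop_atTop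
  have key := tendsto_tsum_of_dominated_convergence (𝓕 := atTop)
    (f := fun (N : ℕ) (k : ℤ) => cN q N k * z ^ k)
    (g := fun k : ℤ => E⁻¹ * (q ^ (k ^ 2) * z ^ k))
    (bound := fun k : ℤ => M0 * M1 * M1 * ‖q ^ (k ^ 2) * z ^ k‖) (hs.mul_left _) (by
      intro k
      have h1 := tR (fun N => (N : ℤ) - k) (tendsto_atTop_add_const_right _ (-k) tN)
      have h2 := tR (fun N => (N : ℤ) + k) (tendsto_atTop_add_const_right _ k tN)
      have h3 : Tendsto (fun N : ℕ => PP (q ^ 2) (2 * N)) atTop (𝓝 E) :=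
        t0.comp (tendsto_id.const_mul_atTop' (by norm_num))
      have h := (((h3.mul h1).mul h2).const_mul (q ^ (k ^ 2))).mul_const (z ^ k)
      convert h using 2
      · simp only [cN]; ring
      · field_simp) (by
      refine Eventually.of_forall fun N k => ?_
      have : cN q N k * z ^ k = PP (q ^ 2) (2 * N) * RR (q ^ 2) (N - k) * RR (q ^ 2) (N + k) *
        (q ^ (k ^ 2) * z ^ k) := by simp only [cN]; ring
      simp only [this]
      rw [norm_mul _ (q ^ (k ^ 2) * z ^ k), norm_mul, norm_mul]
      gcongr
      · exact b0 _
      · exact b1 _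
      · exact b1 _)
  have t2 := (m1.mul m2).tendsto_prod_tprod_nat
  have key2 := tendsto_nhds_unique (key.congr fun N => (hasSum_cN hq0 hq hz N).tsum_eq) t2
  rw [tsum_mul_left] at key2
  rw [← key2]
  field_simp

lemma norm_q_lt {σ : ℂ} (hσ : 0 < σ.im) : ‖Complex.exp (Real.pi * I * σ)‖ < 1 := by
  rw [Complex.norm_exp, Real.exp_lt_one_iff]
  have : ((Real.pi : ℂ) * I * σ).re = -(Real.pi * σ.im) := by simp
  rw [this]
  have := mul_pos Real.pi_pos hσ
  linarith

lemma Theta_split {q w : ℂ} (hq : ‖q‖ < 1) :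
    Theta (q ^ 2) w = (∏' j : ℕ, (1 - (q ^ 2) ^ (j + 1))) *
      ∏' j : ℕ, ((1 - w * (q ^ 2) ^ j) * (1 - (q ^ 2) ^ (j + 1) / w)) := by
  have m0 : Multipliable fun j : ℕ => (1 - (q ^ 2) ^ (j + 1)) := by
    convert mult_aux hq (-q ^ 2) using 2; ring
  have m1 : Multipliable fun j : ℕ => (1 - w * (q ^ 2) ^ j) := by
    convert mult_aux hq (-w) using 2; ring
  have m2 : Multipliable fun j : ℕ => (1 - (q ^ 2) ^ (j + 1) / w) := by
    convert mult_aux hq (-q ^ 2 / w) using 2; ring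
  rw [Theta, ← m0.tprod_mul (m1.mul m2)]
  congr 1; funext j; ring

lemma Theta_eq {σ : ℂ} (hσ : 0 < σ.im) (v : ℂ) :
    Theta (Complex.exp (2 * Real.pi * I * σ)) (Complex.exp (2 * Real.pi * I * v)) =
      jacobiTheta₂ (v - σ / 2 + 1 / 2) σ := by
  set q := Complex.exp (Real.pi * I * σ) with hq
  set z := Complex.exp (2 * Real.pi * I * (v - σ / 2 + 1 / 2)) with hz
  set w := Complex.exp (2 * Real.pi * I * v) with hw
  have hq1 : ‖q‖ < 1 := norm_q_lt hσ
  have hq0 : q ≠ 0 := Complex.exp_ne_zero _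
  have hz0 : z ≠ 0 := Complex.exp_ne_zero _
  have hw0 : w ≠ 0 := Complex.exp_ne_zero _
  have hQ : Complex.exp (2 * Real.pi * I * σ) = q ^ 2 := by
    rw [hq, ← Complex.exp_nat_mul]; congr 1; push_cast; ring
  have hzq : z * q = -w := by
    rw [hz, hq, hw, ← Complex.exp_add, show 2 * Real.pi * I * (v - σ / 2 + 1 / 2) + Real.pi * I * σ
      = 2 * Real.pi * I * v + Real.pi * I by ring, Complex.exp_add, Complex.exp_pi_mul_I]; ring
  have ht : ∀ k : ℤ, jacobiTheta₂_term k (v - σ / 2 + 1 / 2) σ = q ^ (k ^ 2) * z ^ k := by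
    intro k
    rw [jacobiTheta₂_term, hq, hz, ← Complex.exp_int_mul, ← Complex.exp_int_mul, ← Complex.exp_add]
    congr 1; push_cast; ring
  have hs : Summable fun k : ℤ => ‖q ^ (k ^ 2) * z ^ k‖ := by
    have := ((summable_jacobiTheta₂_term_iff (v - σ / 2 + 1 / 2) σ).mpr hσ).norm
    simpa only [ht] using this
  rw [jacobiTheta₂]
  simp only [ht]
  rw [jtp hq0 hq1 hz0 hs, hQ, Theta_split hq1]
  congr 2
  funext j
  have e1 : z * q ^ (2 * j + 1) = - (w * (q ^ 2) ^ j) := by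
    rw [pow_succ', ← mul_assoc, hzq]; ring
  have e2 : z⁻¹ * q ^ (2 * j + 1) = - ((q ^ 2) ^ (j + 1) / w) := by
    have : z = -w / q := by rw [← hzq]; field_simp
    rw [this]; field_simp; ring
  rw [e1, e2]; ring

set_option maxHeartbeats 4000000 in
lemma th1_eq {σ : ℂ} (hσ : 0 < σ.im) (v : ℂ) :
    th1 v σ = I * Complex.exp (Real.pi * I * σ / 4 - Real.pi * I * v) *
      jacobiTheta₂ (v - σ / 2 + 1 / 2) σ := by
  rw [← Theta_eq hσ, th1]
  set q := Complex.exp (Real.pi * I * σ) with hq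
  set w := Complex.exp (2 * Real.pi * I * v) with hw
  have hq1 : ‖q‖ < 1 := norm_q_lt hσ
  have hw0 : w ≠ 0 := Complex.exp_ne_zero _
  have hQ : Complex.exp (2 * Real.pi * I * σ) = q ^ 2 := by
    rw [hq, ← Complex.exp_nat_mul]; congr 1; push_cast; ring
  rw [hQ, Theta_split hq1]
  have m1 : Multipliable fun j : ℕ => (1 - w * (q ^ 2) ^ j) := by
    convert mult_aux hq1 (-w) using 2; ring
  have m1' : Multipliable fun j : ℕ => (1 - w * (q ^ 2) ^ (j + 1)) := by
    convert mult_aux hq1 (-w * q ^ 2) using 2; ring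
  have m2 : Multipliable fun j : ℕ => (1 - (q ^ 2) ^ (j + 1) / w) := by
    convert mult_aux hq1 (-q ^ 2 / w) using 2; ring
  rw [m1.tprod_mul m2, tprod_eq_zero_mul' (f := fun j : ℕ => (1 - w * (q ^ 2) ^ j)) m1', mul_assoc (1 - w * _), ← m1'.tprod_mul m2]
  have hcos : Complex.cos (2 * Real.pi * v) = (w + w⁻¹) / 2 := by
    rw [Complex.cos, hw, ← Complex.exp_neg]; congr 3 <;> ring_nf
  have hsin : 2 * Complex.sin (Real.pi * v) = I * Complex.exp (-(Real.pi * I * v)) * (1 - w) := by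
    have : w = Complex.exp (Real.pi * I * v) * Complex.exp (Real.pi * I * v) := by
      rw [hw, ← Complex.exp_add]; congr 1; ring
    rw [Complex.sin, this, show -(Real.pi * v : ℂ) * I = -(Real.pi * I * v) by ring,
      show (Real.pi * v : ℂ) * I = (Real.pi * I * v) by ring, Complex.exp_neg]
    have := Complex.exp_ne_zero (Real.pi * I * v)
    field_simp
  have hprod : (fun n : ℕ => 1 - 2 * (q ^ 2) ^ (n + 1) * Complex.cos (2 * Real.pi * v) +
      (q ^ 2) ^ (2 * (n + 1))) =
      fun j : ℕ => (1 - w * (q ^ 2) ^ (j + 1)) * (1 - (q ^ 2) ^ (j + 1) / w) := by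
    funext n
    rw [hcos]; field_simp; ring
  rw [hprod, sub_eq_add_neg (Real.pi * I * σ / 4), Complex.exp_add,
    show (2 * Real.pi * I * σ / 8 : ℂ) = Real.pi * I * σ / 4 by ring]
  generalize ∏' j : ℕ, (1 - w * (q ^ 2) ^ (j + 1)) * (1 - (q ^ 2) ^ (j + 1) / w) = B
  generalize ∏' j : ℕ, (1 - (q ^ 2) ^ (j + 1)) = A
  linear_combination Complex.exp (Real.pi * I * σ / 4) * A * B * hsin

lemma th3_eq {σ : ℂ} (hσ : 0 < σ.im) (v : ℂ) : th3 v σ = jacobiTheta₂ v σ := by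
  rw [th3, th1_eq hσ, show v + (σ + 1) / 2 - σ / 2 + 1 / 2 = v + 1 by ring, jacobiTheta₂_add_left,
    show (Real.pi * I * σ / 4 - Real.pi * I * (v + (σ + 1) / 2) : ℂ) =
      -(Real.pi * I * (v + σ / 4)) + -(Real.pi / 2 * I) by ring, Complex.exp_add,
    Complex.exp_neg, Complex.exp_neg (Real.pi / 2 * I), Complex.exp_pi_div_two_mul_I]
  have := Complex.exp_ne_zero (Real.pi * I * (v + σ / 4))
  field_simp

lemma th0_eq {σ : ℂ} (hσ : 0 < σ.im) (v : ℂ) : th0 v σ = jacobiTheta₂ (v + 1 / 2) σ := by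
  rw [th0, th1_eq hσ, show v + σ / 2 - σ / 2 + 1 / 2 = v + 1 / 2 by ring,
    show (Real.pi * I * σ / 4 - Real.pi * I * (v + σ / 2) : ℂ) =
      -(Real.pi * I * (v + σ / 4)) by ring, Complex.exp_neg]
  have := Complex.exp_ne_zero (Real.pi * I * (v + σ / 4))
  field_simp
  simp

lemma br_eq {τ : ℂ} {r : ℝ} (hτ : 0 < τ.im) (hr : 0 < r) (u : ℂ) :
    br τ r u = (-I * τ) ^ (1 / 2 : ℂ) *
      Complex.exp (Real.pi * I * (1 / (4 * τ) + τ / 4 - u / r + 1 / 2)) *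
      jacobiTheta₂ (-(u / r) + 1 / 2 + τ / 2) τ := by
  have hτ0 : τ ≠ 0 := by rintro rfl; simp at hτ
  have hr0 : (r : ℂ) ≠ 0 := by exact_mod_cast hr.ne'
  have hσ : 0 < (-1 / τ).im := by
    rw [neg_div, neg_im, one_div, inv_im, neg_div, neg_neg]
    exact div_pos hτ (normSq_pos.mpr hτ0)
  have hI : (-I * τ) ^ (1 / 2 : ℂ) ≠ 0 := by
    rw [Complex.cpow_def_of_ne_zero (by simp [hτ0])]; exact Complex.exp_ne_zero _
  have h := Theta_eq hσ (-u / (r * τ))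
  rw [br, xp, xp, xp, show -I * Real.pi * (2 * r) / (r * τ) = 2 * Real.pi * I * (-1 / τ) by
      field_simp, show -I * Real.pi * (2 * u) / (r * τ) = 2 * Real.pi * I * (-u / (r * τ)) by ring, h,
    jacobiTheta₂_functional_equation (-(u / r) + 1 / 2 + τ / 2) τ,
    show (-(u / r) + 1 / 2 + τ / 2) / τ = -u / (r * τ) - -1 / τ / 2 + 1 / 2 by field_simp; ring]
  have e : Complex.exp (-I * Real.pi * (u ^ 2 / r - u) / (r * τ)) =
      Complex.exp (Real.pi * I * (1 / (4 * τ) + τ / 4 - u / r + 1 / 2)) *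
      Complex.exp (-Real.pi * I * (-(u / r) + 1 / 2 + τ / 2) ^ 2 / τ) := by
    rw [← Complex.exp_add]; congr 1; field_simp; ring
  rw [e]
  field_simp

lemma Cc_sq {τ : ℂ} {r : ℝ} (hτ : 0 < τ.im) (hr : 0 < r) :
    Cc τ r ^ 2 = -I * τ * Complex.exp (Real.pi * I * (1 / (2 * τ))) := by
  have hτ0 : τ ≠ 0 := by rintro rfl; simp at hτ
  have hr0 : (r : ℂ) ≠ 0 := by exact_mod_cast hr.ne'
  have h1 : (τ ^ (1 / 2 : ℂ)) ^ 2 = τ := by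
    rw [← Complex.cpow_nat_mul]; simp
  have h2 : Complex.exp (-(Real.pi : ℂ) * I / 4) ^ 2 = -I := by
    rw [← Complex.exp_nat_mul, show ((2 : ℕ) : ℂ) * (-(Real.pi : ℂ) * I / 4) = -(Real.pi / 2 * I) by
      push_cast; ring, Complex.exp_neg, Complex.exp_pi_div_two_mul_I, Complex.inv_I]
  have h3 : xp τ r (-(r : ℂ) / 4) ^ 2 = Complex.exp (Real.pi * I * (1 / (2 * τ))) := by
    rw [xp, ← Complex.exp_nat_mul]; congr 1; push_cast; field_simp; ring
  rw [Cc, mul_pow, mul_pow, h1, h2, h3]; ring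

set_option maxHeartbeats 4000000 in
lemma theta_add {τ : ℂ} (hτ : 0 < τ.im) (X Y : ℂ) :
    jacobiTheta₂ (X + Y + 1 / 2) (τ / 2) * jacobiTheta₂ (X - Y) (τ / 2) -
      jacobiTheta₂ (X + Y) (τ / 2) * jacobiTheta₂ (X - Y + 1 / 2) (τ / 2) =
    -2 * Complex.exp (Real.pi * I * (τ / 2 - 2 * X - 2 * Y)) *
      (jacobiTheta₂ (-(2 * X) + 1 / 2 + τ / 2) τ * jacobiTheta₂ (-(2 * Y) + 1 / 2 + τ / 2) τ) := by
  have hτ2 : 0 < (τ / 2).im := by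
    rw [show τ / 2 = ((1 / 2 : ℝ) : ℂ) * τ by push_cast; ring, Complex.im_ofReal_mul]; linarith
  have S : ∀ {σ : ℂ}, 0 < σ.im → ∀ x y : ℂ,
      HasSum (fun p : ℤ × ℤ => jacobiTheta₂_term p.1 x σ * jacobiTheta₂_term p.2 y σ)
        (jacobiTheta₂ x σ * jacobiTheta₂ y σ) := by
    intro σ hσ x y
    have hx := hasSum_jacobiTheta₂_term x hσ
    have hy := hasSum_jacobiTheta₂_term y hσ
    have h1 := (summable_mul_of_summable_norm hx.summable.norm hy.summable.norm).hasSum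
    rw [← tsum_mul_tsum_of_summable_norm hx.summable.norm hy.summable.norm] at h1
    exact h1
  have hL := (S hτ2 (X + Y + 1 / 2) (X - Y)).sub (S hτ2 (X + Y) (X - Y + 1 / 2))
  have hR := (S hτ (-(2 * X) + 1 / 2 + τ / 2) (-(2 * Y) + 1 / 2 + τ / 2)).mul_left
    (-2 * Complex.exp (Real.pi * I * (τ / 2 - 2 * X - 2 * Y)))
  have shift : ∀ (n : ℤ) (x σ : ℂ),
      jacobiTheta₂_term n (x + 1 / 2) σ = (-1) ^ n * jacobiTheta₂_term n x σ := by
    intro n x σ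
    rw [jacobiTheta₂_term, jacobiTheta₂_term, ← Complex.exp_pi_mul_I, ← Complex.exp_int_mul,
      ← Complex.exp_add]
    congr 1; ring
  let g : ℤ × ℤ → ℤ × ℤ := fun p => (-(p.1 + p.2 + 1), p.2 - p.1)
  have hg : Function.Injective g := by
    rintro ⟨a, b⟩ ⟨c, d⟩ h
    simp only [g, Prod.mk.injEq] at h ⊢
    omega
  have hL2 := (hg.hasSum_iff (f := fun p : ℤ × ℤ =>
      jacobiTheta₂_term p.1 (X + Y + 1 / 2) (τ / 2) * jacobiTheta₂_term p.2 (X - Y) (τ / 2) -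
      jacobiTheta₂_term p.1 (X + Y) (τ / 2) * jacobiTheta₂_term p.2 (X - Y + 1 / 2) (τ / 2)) (by
    rintro ⟨n, m⟩ hnm
    have hpar : Even (n - m) := by
      by_contra hodd
      rw [Int.not_even_iff_odd] at hodd
      obtain ⟨l, hl⟩ := hodd
      exact hnm ⟨(-m - l - 1, -l - 1), by simp only [g, Prod.mk.injEq]; omega⟩
    have : ((-1 : ℂ)) ^ n = (-1) ^ m := by
      rw [show n = (n - m) + m by ring, zpow_add₀ (by norm_num), hpar.neg_one_zpow, one_mul]
    simp only [shift, this]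
    ring)).mpr hL
  refine hL2.unique ?_
  refine hR.congr_fun fun p => ?_
  obtain ⟨k, l⟩ := p
  simp only [Function.comp, g]
  rw [show -(2 * X) + 1 / 2 + τ / 2 = (-(2 * X) + τ / 2) + 1 / 2 by ring,
    show -(2 * Y) + 1 / 2 + τ / 2 = (-(2 * Y) + τ / 2) + 1 / 2 by ring]
  simp only [shift]
  have s1 : ((-1 : ℂ)) ^ (-(k + l + 1)) = -((-1) ^ k * (-1) ^ l) := by
    rw [zpow_neg, ← inv_zpow, zpow_add₀ (by norm_num), zpow_add₀ (by norm_num)]; norm_num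
  have s2 : ((-1 : ℂ)) ^ (l - k) = ((-1) ^ k * (-1) ^ l) := by
    rw [sub_eq_add_neg, zpow_add₀ (by norm_num), zpow_neg, ← inv_zpow]; norm_num [mul_comm]
  rw [s1, s2]
  have e : jacobiTheta₂_term (-(k + l + 1)) (X + Y) (τ / 2) * jacobiTheta₂_term (l - k) (X - Y) (τ / 2)
      = Complex.exp (Real.pi * I * (τ / 2 - 2 * X - 2 * Y)) *
        (jacobiTheta₂_term k (-(2 * X) + τ / 2) τ * jacobiTheta₂_term l (-(2 * Y) + τ / 2) τ) := by
    simp only [jacobiTheta₂_term, ← Complex.exp_add]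
    congr 1; push_cast; ring
  linear_combination (-2 * ((-1) ^ k * (-1) ^ l)) * e

lemma main_id {τ : ℂ} {r : ℝ} (hτ : 0 < τ.im) (hr : 0 < r) (s u : ℂ) :
    Cc τ r ^ 2 * (th0 ((s + u) / (2 * r)) (τ / 2) * th3 ((s - u) / (2 * r)) (τ / 2) -
      th3 ((s + u) / (2 * r)) (τ / 2) * th0 ((s - u) / (2 * r)) (τ / 2)) =
    2 * br τ r s * br τ r u := by
  have hτ0 : τ ≠ 0 := by rintro rfl; simp at hτ
  have hr0 : (r : ℂ) ≠ 0 := by exact_mod_cast hr.ne'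
  have hτ2 : 0 < (τ / 2).im := by
    rw [show τ / 2 = ((1 / 2 : ℝ) : ℂ) * τ by push_cast; ring, Complex.im_ofReal_mul]; linarith
  have h := theta_add hτ (s / (2 * r)) (u / (2 * r))
  have hsq : ((-I * τ) ^ (1 / 2 : ℂ)) ^ 2 = -I * τ := by
    rw [← Complex.cpow_nat_mul]; simp
  rw [th0_eq hτ2, th0_eq hτ2, th3_eq hτ2, th3_eq hτ2, add_div, sub_div, h, Cc_sq hτ hr,
    br_eq hτ hr, br_eq hτ hr, show 2 * (s / (2 * r)) = s / (r : ℂ) by field_simp,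
    show 2 * (u / (2 * r)) = u / (r : ℂ) by field_simp]
  have e : Complex.exp (Real.pi * I * (1 / (4 * τ) + τ / 4 - s / r + 1 / 2)) *
      Complex.exp (Real.pi * I * (1 / (4 * τ) + τ / 4 - u / r + 1 / 2)) =
      -(Complex.exp (Real.pi * I * (1 / (2 * τ))) *
        Complex.exp (Real.pi * I * (τ / 2 - s / r - u / r))) := by
    rw [← Complex.exp_add, ← Complex.exp_add, ← neg_one_mul, ← Complex.exp_pi_mul_I,
      ← Complex.exp_add]
    congr 1; field_simp; ring
  generalize jacobiTheta₂ (-(s / r) + 1 / 2 + τ / 2) τ = J1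
  generalize jacobiTheta₂ (-(u / r) + 1 / 2 + τ / 2) τ = J2
  linear_combination (-2 * J1 * J2 * (-I * τ)) * e - 2 * J1 * J2 *
    (Complex.exp (Real.pi * I * (1 / (4 * τ) + τ / 4 - s / r + 1 / 2)) *
      Complex.exp (Real.pi * I * (1 / (4 * τ) + τ / 4 - u / r + 1 / 2))) * hsq

/-- Second inversion relation for intertwining vectors. -/
theorem inversion_second (τ : ℂ) (r : ℝ) (hτ : 0 < τ.im) (hr : 0 < r)
    (b : ℤ) (ε ε' : ℤ) (hε : ε = 1 ∨ ε = -1) (hε' : ε' = 1 ∨ ε' = -1) (u : ℂ)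
    (hu : br τ r u ≠ 0) (hb : br τ r (b : ℂ) ≠ 0) :
    ∑ a ∈ ({b - 1, b + 1} : Finset ℤ), psiStar τ r u ε' a b * psi τ r u ε b a =
      if ε' = ε then 1 else 0 := by
  have h := main_id hτ hr (b : ℂ) u
  rw [Finset.sum_pair (by omega)]
  have e1 : (((b - 1 : ℤ) : ℂ) - b) * (u - 1) + ((b - 1 : ℤ) : ℂ) = b - u := by push_cast; ring
  have e2 : (((b + 1 : ℤ) : ℂ) - b) * (u - 1) + ((b + 1 : ℤ) : ℂ) = b + u := by push_cast; ring
  have e3 : ((b : ℂ) - ((b - 1 : ℤ) : ℂ)) * u + b = b + u := by push_cast; ring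
  have e4 : ((b : ℂ) - ((b + 1 : ℤ) : ℂ)) * u + b = b - u := by push_cast; ring
  have e5 : ((b - 1 : ℤ) : ℂ) - b = -1 := by push_cast; ring
  have e6 : ((b + 1 : ℤ) : ℂ) - b = 1 := by push_cast; ring
  simp only [psiStar, psi, e1, e2, e3, e4]
  rw [e5, e6]
  rcases hε with rfl | rfl <;> rcases hε' with rfl | rfl <;> norm_num <;> field_simp <;>
    first | linear_combination h | ring

end Ell
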